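/- Let η : ℝ → ℝ be smooth and compactly supported. For every s ∈ ℝ and all b, b' with -1/2 < b' ≤ b < 1/2, there exists C > 0 (depending on η, s, b, b') such that for every τ ∈ (0,1], every integer N ≥ 1 with T := Nτ ≤ 1, and every sequence (u_n)_{n∈ℤ} of functions in H^s(𝕋) with only finitely many nonzero terms, ‖(η(nτ/T) u_n)_{n∈ℤ}‖_{X^{s,b'}_τ} ≤ C T^{b-b'} ‖(u_n)‖_{X^{s,b}_τ}. -/

import Mathlib

noncomputable section

open MeasureTheory Complex Filter Topology AddCircle
open scoped ENNReal

abbrev Torus := AddCircle (2 * Real.pi)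

instance : Fact (0 < 2 * Real.pi) := ⟨by positivity⟩

/-- Japanese bracket `⟨x⟩ = (1+|x|²)^{1/2}`. -/
def jbr (x : ℝ) : ℝ := Real.sqrt (1 + x ^ 2)

/-- The Sobolev `H^s` norm on the torus, via Fourier coefficients. -/
def hsNorm (s : ℝ) (f : Torus → ℂ) : ℝ :=
  Real.sqrt (∑' k : ℤ, jbr k ^ (2 * s) * ‖fourierCoeff f k‖ ^ 2)

/-- Membership in `H^s(𝕋)` (as a function): square integrable with finite `H^s` norm. -/
def InHs (s : ℝ) (f : Torus → ℂ) : Prop :=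
  MemLp f 2 haarAddCircle ∧ Summable fun k : ℤ => jbr k ^ (2 * s) * ‖fourierCoeff f k‖ ^ 2

/-- The frequency cutoff `Π_τ`, keeping the Fourier modes `|k| ≤ τ^{-1/2}`. -/
def projC (τ : ℝ) (f : Torus → ℂ) : Torus → ℂ := fun x =>
  ∑' k : ℤ, if |(k : ℝ)| ≤ τ ^ (-(1 : ℝ) / 2) then fourierCoeff f k * fourier k x else 0

/-- The free Schrödinger group `e^{it∂_x²}`, given by the Fourier multiplier `e^{-itk²}`. -/
def schrod (t : ℝ) (f : Torus → ℂ) : Torus → ℂ := fun x =>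
  ∑' k : ℤ, Complex.exp (-Complex.I * t * (k : ℂ) ^ 2) * fourierCoeff f k * fourier k x

/-- Continuity on `I` with values in `L²(𝕋)`. -/
def ContL2On (I : Set ℝ) (u : ℝ → Torus → ℂ) : Prop :=
  (∀ t ∈ I, MemLp (u t) 2 haarAddCircle) ∧
  ∀ t ∈ I, Tendsto (fun t' => eLpNorm (u t' - u t) 2 haarAddCircle) (nhdsWithin t I) (nhds 0)

/-- Continuity on `I` with values in `H^s(𝕋)`. -/
def ContHsOn (s : ℝ) (I : Set ℝ) (u : ℝ → Torus → ℂ) : Prop :=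
  (∀ t ∈ I, InHs s (u t)) ∧
  ∀ t ∈ I, Tendsto (fun t' => hsNorm s (u t' - u t)) (nhdsWithin t I) (nhds 0)

/-- The cubic nonlinearity `|f|² f` (pointwise). -/
def cubic (f : Torus → ℂ) : Torus → ℂ := fun x => (‖f x‖ : ℂ) ^ 2 * f x

/-- The filtered cubic nonlinearity `Π_τ(|Π_τ f|² Π_τ f)`. -/
def projCubic (τ : ℝ) (f : Torus → ℂ) : Torus → ℂ := projC τ (cubic (projC τ f))

/-- `v` is the (global-in-time) mild solution of the projected equation
`i∂_t v = -∂_x² v - μ Π_τ(|Π_τ v|² Π_τ v)`, `v(0) = Π_τ u₀`. -/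
def IsProjSolution (μ τ : ℝ) (u₀ : Torus → ℂ) (v : ℝ → Torus → ℂ) : Prop :=
  ContL2On Set.univ v ∧
  ∀ t : ℝ, ∀ x : Torus,
    v t x = schrod t (projC τ u₀) x
      + Complex.I * μ * ∫ s in (0 : ℝ)..t, schrod (t - s) (projCubic τ (v s)) x

/-- The cubic NLS `i∂_t u = -∂_x² u - μ |u|² u` holds in the sense of space-time
distributions on `(0,T) × 𝕋` (tested against `ψ(t) e^{-ikx}`). -/
def DistribSolOn (μ T : ℝ) (u : ℝ → Torus → ℂ) : Prop :=
  ∀ k : ℤ, ∀ ψ : ℝ → ℂ, ContDiff ℝ (⊤ : ℕ∞) ψ → tsupport ψ ⊆ Set.Ioo 0 T →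
    -Complex.I * ∫ t : ℝ, deriv ψ t * fourierCoeff (u t) k
      = (k : ℂ) ^ 2 * ∫ t : ℝ, ψ t * fourierCoeff (u t) k
        - (μ : ℂ) * ∫ t : ℝ, ψ t * fourierCoeff (cubic (u t)) k

/-- `u ∈ L⁴((0,T) × 𝕋)`. -/
def SpaceTimeL4 (T : ℝ) (u : ℝ → Torus → ℂ) : Prop :=
  MemLp (fun p : ℝ × Torus => u p.1 p.2) 4
    ((volume.restrict (Set.Ioo 0 T)).prod haarAddCircle)

/-- Space-time Fourier transform `ṽ(σ,k)` of `v : ℝ × 𝕋 → ℂ`. -/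
def stFT (v : ℝ → Torus → ℂ) (σ : ℝ) (k : ℤ) : ℂ :=
  ∫ t : ℝ, Complex.exp (-Complex.I * σ * t) * fourierCoeff (v t) k

/-- The (continuous) Bourgain `X^{s,b}` norm, valued in `ℝ≥0∞`. -/
def XcNorm (s b : ℝ) (v : ℝ → Torus → ℂ) : ℝ≥0∞ :=
  (∫⁻ σ : ℝ, ∑' k : ℤ,
      ENNReal.ofReal ((1 + |(k : ℝ)|) ^ (2 * s) * (1 + |σ + (k : ℝ) ^ 2|) ^ (2 * b)
        * ‖stFT v σ k‖ ^ 2)) ^ (1 / 2 : ℝ)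

/-- The restriction norm `‖u‖_{X^{s,b}(T)}` is bounded by `M`: some extension of `u`
from `(0,T)` has `X^{s,b}` norm at most `M`. -/
def XresBounded (s b T : ℝ) (u : ℝ → Torus → ℂ) (M : ℝ≥0∞) : Prop :=
  ∃ v : ℝ → Torus → ℂ, (∀ t ∈ Set.Ioo 0 T, v t = u t) ∧ XcNorm s b v ≤ M

/-- `u` is a Bourgain-class solution of cubic NLS on `[0,T]` with datum `u₀`. -/
def IsNLSSolution (μ T : ℝ) (u₀ : Torus → ℂ) (u : ℝ → Torus → ℂ) : Prop :=
  ContL2On (Set.Icc 0 T) u ∧ SpaceTimeL4 T u ∧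
  (∃ b ∈ Set.Ioo (1 / 2 : ℝ) (5 / 8 : ℝ), ∃ v : ℝ → Torus → ℂ,
      (∀ t ∈ Set.Ioo 0 T, v t = u t) ∧ XcNorm 0 b v < ⊤) ∧
  u 0 = u₀ ∧ DistribSolOn μ T u

/-- One step of the pointwise nonlinear flow `e^{iμτ|Π_τ f|²} Π_τ f`. -/
def lieFlow (μ τ : ℝ) (f : Torus → ℂ) : Torus → ℂ := fun x =>
  Complex.exp (Complex.I * μ * τ * (‖projC τ f x‖ : ℂ) ^ 2) * projC τ f x

/-- The filtered Lie splitting scheme `u⁰ = Π_τ u₀`,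
`u^{n+1} = e^{iτ∂_x²} Π_τ (e^{iμτ|Π_τ uⁿ|²} Π_τ uⁿ)`. -/
def lieScheme (μ τ : ℝ) (u₀ : Torus → ℂ) : ℕ → Torus → ℂ
  | 0 => projC τ u₀
  | n + 1 => schrod τ (projC τ (lieFlow μ τ (lieScheme μ τ u₀ n)))

/-- `d_τ(σ) = (e^{iτσ}-1)/τ`. -/
def dtau (τ σ : ℝ) : ℂ := (Complex.exp (Complex.I * τ * σ) - 1) / τ

/-- The discrete Bourgain `X^{s,b}_τ` norm of a sequence of functions on the torus. -/
def XdNorm (τ s b : ℝ) (u : ℤ → Torus → ℂ) : ℝ :=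
  Real.sqrt (∫ σ in Set.Ioc (-(Real.pi / τ)) (Real.pi / τ),
    ∑' k : ℤ, jbr k ^ (2 * s) * jbr ‖dtau τ (σ - (k : ℝ) ^ 2)‖ ^ (2 * b) *
      ‖(τ : ℂ) * ∑' m : ℤ, fourierCoeff (u m) k * Complex.exp (Complex.I * m * τ * σ)‖ ^ 2)

/-- The discrete space-time Lebesgue norm `‖(u_n)‖_{ℓ^p_τ L^q}`. -/
def lpLqNorm (τ p q : ℝ) (u : ℤ → Torus → ℂ) : ℝ :=
  (τ * ∑' n : ℤ, (eLpNorm (u n) (ENNReal.ofReal q) haarAddCircle).toReal ^ p) ^ (1 / p)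

def ES (N : ℕ) (g : ℝ → ℝ) (x : ℝ) : ℂ :=
  ∑' m : ℤ, (g ((m : ℝ) / N) : ℂ) * Complex.exp (Complex.I * m * x)

lemma ES_zero_out {N A : ℕ} (hN : 1 ≤ N) {g : ℝ → ℝ} (hg : ∀ t, (A : ℝ) < |t| → g t = 0)
    {m : ℤ} (hm : m ∉ Finset.Icc (-((A * N : ℕ) : ℤ)) ((A * N : ℕ) : ℤ)) : g ((m : ℝ) / N) = 0 := by
  apply hg
  have hN' : (0 : ℝ) < N := by exact_mod_cast hN
  rw [abs_div, abs_of_pos hN', lt_div_iff₀ hN']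
  have : ((A * N : ℕ) : ℤ) < |m| := by
    by_contra h
    push Not at h
    exact hm (Finset.mem_Icc.2 (abs_le.1 h))
  have h2 : (((A * N : ℕ) : ℤ) : ℝ) < ((|m| : ℤ) : ℝ) := by exact_mod_cast this
  push_cast at h2
  exact h2

lemma ES_summable {N A : ℕ} (hN : 1 ≤ N) {g : ℝ → ℝ} (hg : ∀ t, (A : ℝ) < |t| → g t = 0) (x : ℝ) :
    Summable fun m : ℤ => (g ((m : ℝ) / N) : ℂ) * Complex.exp (Complex.I * m * x) := by
  apply summable_of_ne_finset_zero (s := Finset.Icc (-((A * N : ℕ) : ℤ)) ((A * N : ℕ) : ℤ))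
  intro m hm
  rw [ES_zero_out hN hg hm]; simp

lemma ES_eq_sum {N A : ℕ} (hN : 1 ≤ N) {g : ℝ → ℝ} (hg : ∀ t, (A : ℝ) < |t| → g t = 0) (x : ℝ) :
    ES N g x = ∑ m ∈ Finset.Icc (-((A * N : ℕ) : ℤ)) ((A * N : ℕ) : ℤ),
      (g ((m : ℝ) / N) : ℂ) * Complex.exp (Complex.I * m * x) := by
  apply tsum_eq_sum
  intro m hm
  rw [ES_zero_out hN hg hm]; simp

lemma norm_expI (m : ℤ) (x : ℝ) : ‖Complex.exp (Complex.I * m * x)‖ = 1 := by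
  have : Complex.I * m * x = ((m * x : ℝ) : ℂ) * Complex.I := by push_cast; ring
  rw [this, Complex.norm_exp_ofReal_mul_I]

lemma ES_bound : ∀ (p : ℕ) (A : ℕ) (N : ℕ) (_ : 1 ≤ N) (g : ℝ → ℝ) (B : ℝ) (_ : ContDiff ℝ (⊤ : ℕ∞) g)
    (_ : ∀ t, (A : ℝ) < |t| → g t = 0) (_ : ∀ t, |iteratedDeriv p g t| ≤ B) (x : ℝ),
    (N * ‖Complex.exp (Complex.I * x) - 1‖) ^ p * ‖ES N g x‖ ≤ (2 * (A + p) + 1) * N * B := by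
  intro p
  induction p with
  | zero =>
    intro A N hN g B hgs hg hB x
    have hN' : (1 : ℝ) ≤ N := by exact_mod_cast hN
    have hB0 : 0 ≤ B := le_trans (abs_nonneg _) (hB 0)
    rw [ES_eq_sum hN hg, pow_zero, one_mul]
    refine (norm_sum_le _ _).trans ?_
    have : ∀ m ∈ Finset.Icc (-((A * N : ℕ) : ℤ)) ((A * N : ℕ) : ℤ),
        ‖(g ((m : ℝ) / N) : ℂ) * Complex.exp (Complex.I * m * x)‖ ≤ B := by
      intro m _
      rw [norm_mul, norm_expI, mul_one, Complex.norm_real, Real.norm_eq_abs]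
      simpa using hB (m / N)
    refine (Finset.sum_le_card_nsmul _ _ _ this).trans ?_
    rw [Int.card_Icc, nsmul_eq_mul]
    have : ((((A * N : ℕ) : ℤ) + 1 - -((A * N : ℕ) : ℤ)).toNat : ℕ) = 2 * A * N + 1 := by
      have : ((A * N : ℕ) : ℤ) + 1 - -((A * N : ℕ) : ℤ) = ((2 * A * N + 1 : ℕ) : ℤ) := by
        push_cast; ring
      rw [this, Int.toNat_natCast]
    rw [this]
    push_cast
    apply mul_le_mul_of_nonneg_right _ hB0
    nlinarith
  | succ p ih =>
    intro A N hN g B hgs hg hB x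
    have hN' : (1 : ℝ) ≤ N := by exact_mod_cast hN
    have hN0 : (0 : ℝ) < N := by linarith
    set d : ℝ → ℝ := fun t => g (t - 1 / N) - g t with hd
    have hinv : (1 : ℝ) / N ≤ 1 := by rw [div_le_one hN0]; exact hN'
    have hinv0 : 0 < (1 : ℝ) / N := by positivity
    have hshift : ContDiff ℝ (⊤ : ℕ∞) fun t => g (t - 1 / N) :=
      hgs.comp (contDiff_id.sub contDiff_const)
    have hds : ContDiff ℝ (⊤ : ℕ∞) d := hshift.sub hgs
    have hd0 : ∀ t, (((A + 1 : ℕ) : ℝ)) < |t| → d t = 0 := by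
      intro t ht
      push_cast at ht
      have h1 : (A : ℝ) < |t - 1 / N| := by
        have := abs_sub_abs_le_abs_sub t (1 / (N : ℝ))
        rw [abs_of_pos hinv0] at this
        linarith
      simp only [hd]
      rw [hg _ h1, hg _ (by linarith), sub_zero]
    have hdB : ∀ t, |iteratedDeriv p d t| ≤ B * (1 / N) := by
      intro t
      have e1 : iteratedDeriv p d t = iteratedDeriv p g (t - 1 / N) - iteratedDeriv p g t := by
        simp only [hd]
        rw [iteratedDeriv_fun_sub (hshift.contDiffAt.of_le (by exact_mod_cast le_top))
          (hgs.contDiffAt.of_le (by exact_mod_cast le_top)), iteratedDeriv_comp_sub_const]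
      rw [e1]
      have hdiff : Differentiable ℝ (iteratedDeriv p g) :=
        hgs.differentiable_iteratedDeriv p (by exact_mod_cast ENat.natCast_lt_top p)
      have := Convex.norm_image_sub_le_of_norm_deriv_le (f := iteratedDeriv p g) (s := Set.univ)
        (x := t) (y := t - 1 / N) (C := B) (fun z _ => hdiff z)
        (fun z _ => by rw [← iteratedDeriv_succ]; exact hB z) convex_univ trivial trivial
      rw [Real.norm_eq_abs] at this
      refine this.trans (le_of_eq ?_)
      rw [sub_sub_cancel_left, norm_neg, Real.norm_of_nonneg hinv0.le]
    have key : (Complex.exp (Complex.I * x) - 1) * ES N g x = ES N d x := by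
      have s1 := ES_summable hN hg x
      rw [sub_mul, one_mul]
      have e2 : Complex.exp (Complex.I * x) * ES N g x =
          ∑' m : ℤ, (g ((m : ℝ) / N - 1 / N) : ℂ) * Complex.exp (Complex.I * m * x) := by
        unfold ES
        rw [← tsum_mul_left, ← (Equiv.addRight (1 : ℤ)).tsum_eq (fun m : ℤ => (g ((m : ℝ) / N - 1 / N) : ℂ) * Complex.exp (Complex.I * m * x))]
        congr 1
        ext m
        simp only [Equiv.coe_addRight]
        have : (((m + 1 : ℤ) : ℝ) / N - 1 / N) = m / N := by push_cast; ring
        rw [this, mul_left_comm, ← Complex.exp_add]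
        congr 2
        push_cast; ring
      rw [e2]
      have s2 : Summable fun m : ℤ => (g ((m : ℝ) / N - 1 / N) : ℂ) * Complex.exp (Complex.I * m * x) := by
        apply ES_summable (A := A + 1) (g := fun t => g (t - 1 / N)) hN
        intro t ht
        push_cast at ht
        apply hg
        have := abs_sub_abs_le_abs_sub t (1 / (N : ℝ))
        rw [abs_of_pos hinv0] at this
        linarith
      unfold ES
      rw [← s2.tsum_sub s1]
      congr 1
      ext m
      simp only [hd]
      push_cast
      ring
    have := ih (A + 1) N hN d (B * (1 / N)) hds hd0 hdB x
    rw [← key, norm_mul] at this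
    have h3 := mul_le_mul_of_nonneg_left this hN0.le
    calc _ = N * ((N * ‖Complex.exp (Complex.I * x) - 1‖) ^ p * (‖Complex.exp (Complex.I * x) - 1‖ * ‖ES N g x‖)) := by ring
      _ ≤ _ := h3
      _ = _ := by push_cast; field_simp; ring

lemma ES_decay (η : ℝ → ℝ) (hη : ContDiff ℝ (⊤ : ℕ∞) η) (hηc : HasCompactSupport η) :
    ∃ C > (0 : ℝ), ∀ N : ℕ, 1 ≤ N → ∀ x : ℝ,
      ‖ES N η x‖ * (1 + N * ‖Complex.exp (Complex.I * x) - 1‖) ^ 3 ≤ C * N := by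
  obtain ⟨R, hR⟩ : ∃ R : ℝ, ∀ t, R < |t| → η t = 0 := by
    obtain ⟨R, hR⟩ := hηc.isCompact.isBounded.exists_norm_le
    refine ⟨R, fun t ht => ?_⟩
    by_contra h
    exact absurd (hR t (subset_tsupport _ h)) (not_le.2 ht)
  obtain ⟨A, hA⟩ := exists_nat_ge R
  have hg : ∀ t, (A : ℝ) < |t| → η t = 0 := fun t ht => hR t (hA.trans_lt ht)
  have bd : ∀ p : ℕ, ∃ B, ∀ t, |iteratedDeriv p η t| ≤ B := by
    intro p
    obtain ⟨B, hB⟩ := (hηc.iteratedFDeriv (𝕜 := ℝ) p).exists_bound_of_continuous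
      (hη.continuous_iteratedFDeriv (by exact_mod_cast le_top))
    refine ⟨B, fun t => ?_⟩
    rw [← Real.norm_eq_abs, ← norm_iteratedFDeriv_eq_norm_iteratedDeriv]
    exact hB t
  obtain ⟨B0, h0⟩ := bd 0
  obtain ⟨B3, h3⟩ := bd 3
  have hB0 : 0 ≤ B0 := (abs_nonneg _).trans (h0 0)
  have hB3 : 0 ≤ B3 := (abs_nonneg _).trans (h3 0)
  refine ⟨4 * ((2 * (A + (0 : ℕ)) + 1) * B0 + (2 * (A + (3 : ℕ)) + 1) * B3) + 1, by positivity, ?_⟩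
  intro N hN x
  have b0 := ES_bound 0 A N hN η B0 hη hg h0 x
  have b3 := ES_bound 3 A N hN η B3 hη hg h3 x
  set y := (N : ℝ) * ‖Complex.exp (Complex.I * x) - 1‖ with hy
  have hy0 : 0 ≤ y := by positivity
  set e := ‖ES N η x‖
  have he : 0 ≤ e := norm_nonneg _
  have : (1 + y) ^ 3 ≤ 4 * (1 + y ^ 3) := by nlinarith [mul_nonneg (add_nonneg zero_le_one hy0) (sq_nonneg (y - 1))]
  have hN0 : (0 : ℝ) ≤ N := by positivity
  calc e * (1 + y) ^ 3 ≤ e * (4 * (1 + y ^ 3)) := mul_le_mul_of_nonneg_left this he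
    _ = 4 * (y ^ 0 * e + y ^ 3 * e) := by ring
    _ ≤ 4 * ((2 * (A + (0 : ℕ)) + 1) * N * B0 + (2 * (A + (3 : ℕ)) + 1) * N * B3) := by gcongr
    _ ≤ _ := by linarith

lemma orth (j : ℤ) : ∫ z in (-Real.pi)..Real.pi, Complex.exp (Complex.I * j * z)
    = if j = 0 then ((2 * Real.pi : ℝ) : ℂ) else 0 := by
  split_ifs with h
  · subst h
    simp
    ring
  · have hj : Complex.I * (j : ℂ) ≠ 0 := mul_ne_zero Complex.I_ne_zero (by exact_mod_cast h)
    rw [integral_exp_mul_complex hj]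
    have : Complex.exp (Complex.I * j * (Real.pi : ℝ)) = Complex.exp (Complex.I * j * ((-Real.pi : ℝ))) := by
      rw [Complex.exp_eq_exp_iff_exists_int]
      exact ⟨j, by push_cast; ring⟩
    rw [this, sub_self, zero_div]

lemma ES_conv {N A : ℕ} (hN : 1 ≤ N) {g : ℝ → ℝ} (hg : ∀ t, (A : ℝ) < |t| → g t = 0)
    (F : Finset ℤ) (c : ℤ → ℂ) (y : ℝ) :
    ∫ z in (-Real.pi)..Real.pi, ES N g (y - z) * ∑ m ∈ F, c m * Complex.exp (Complex.I * m * z)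
      = ((2 * Real.pi : ℝ) : ℂ) * ∑ m ∈ F, (g ((m : ℝ) / N) : ℂ) * c m * Complex.exp (Complex.I * m * y) := by
  set S := Finset.Icc (-((A * N : ℕ) : ℤ)) ((A * N : ℕ) : ℤ) with hS
  have e1 : ∀ z : ℝ, ES N g (y - z) * ∑ m ∈ F, c m * Complex.exp (Complex.I * m * z)
      = ∑ m ∈ F, ∑ j ∈ S, ((g ((j : ℝ) / N) : ℂ) * c m * Complex.exp (Complex.I * j * y)) *
        Complex.exp (Complex.I * (m - j : ℤ) * z) := by
    intro z
    rw [ES_eq_sum hN hg, Finset.mul_sum]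
    refine Finset.sum_congr rfl fun m _ => ?_
    rw [Finset.sum_mul]
    refine Finset.sum_congr rfl fun j _ => ?_
    have : Complex.exp (Complex.I * j * ((y - z : ℝ) : ℂ)) * Complex.exp (Complex.I * m * z)
      = Complex.exp (Complex.I * j * y) * Complex.exp (Complex.I * (m - j : ℤ) * z) := by
      rw [← Complex.exp_add, ← Complex.exp_add]
      congr 1
      push_cast; ring
    linear_combination ((g ((j : ℝ) / N) : ℂ) * c m) * this
  simp_rw [e1]
  rw [intervalIntegral.integral_finsetSum, Finset.mul_sum]
  · refine Finset.sum_congr rfl fun m _ => ?_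
    rw [intervalIntegral.integral_finsetSum]
    · simp_rw [intervalIntegral.integral_const_mul, orth]
      by_cases hm : m ∈ S
      · rw [Finset.sum_eq_single m]
        · simp; ring
        · intro j _ hj
          rw [if_neg (by omega), mul_zero]
        · exact fun h => absurd hm h
      · rw [ES_zero_out hN hg hm, Finset.sum_eq_zero]
        · simp
        · intro j hj
          rw [if_neg (by rintro h; exact hm (by rwa [sub_eq_zero.1 h])), mul_zero]
    · intro j _
      apply Continuous.intervalIntegrable
      fun_prop
  · intro m _
    apply Continuous.intervalIntegrable
    fun_prop

lemma schur {μ : Measure ℝ} [SFinite μ] (k : ℝ → ℝ → ℝ≥0∞) (hk : Measurable (Function.uncurry k))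
    (ρ H g : ℝ → ℝ≥0∞) (hρ : Measurable ρ) (hH : Measurable H)
    (hgH : ∀ z, g z ≤ ρ z ^ (1 / 2 : ℝ) * H z ^ (1 / 2 : ℝ)) (A : ℝ≥0∞)
    (hA : ∀ y, ∫⁻ z, k y z * ρ z ∂μ ≤ A) (hB : ∀ z, ∫⁻ y, ρ y * k y z ∂μ ≤ A) :
    ∫⁻ y, ρ y * (∫⁻ z, k y z * g z ∂μ) ^ 2 ∂μ ≤ A * A * ∫⁻ z, H z ∂μ := by
  have hky : ∀ y, Measurable (k y) := fun y => hk.of_uncurry_left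
  have step : ∀ y, (∫⁻ z, k y z * g z ∂μ) ^ 2 ≤ A * ∫⁻ z, k y z * H z ∂μ := by
    intro y
    have h1 : ∫⁻ z, k y z * g z ∂μ ≤ ∫⁻ z, ((fun z => (k y z * ρ z) ^ (1 / 2 : ℝ)) *
        (fun z => (k y z * H z) ^ (1 / 2 : ℝ))) z ∂μ := by
      refine lintegral_mono fun z => ?_
      simp only [Pi.mul_apply]
      rw [ENNReal.mul_rpow_of_nonneg _ _ (by norm_num), ENNReal.mul_rpow_of_nonneg _ _ (by norm_num)]
      calc k y z * g z ≤ k y z * (ρ z ^ (1 / 2 : ℝ) * H z ^ (1 / 2 : ℝ)) := by gcongr; exact hgH z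
        _ = (k y z ^ (1 / 2 : ℝ) * k y z ^ (1 / 2 : ℝ)) * (ρ z ^ (1 / 2 : ℝ) * H z ^ (1 / 2 : ℝ)) := by
          rw [← ENNReal.rpow_add_of_nonneg _ _ (by norm_num) (by norm_num)]; norm_num
        _ = _ := by ring
    have h2 := ENNReal.lintegral_mul_le_Lp_mul_Lq μ (p := 2) (q := 2) Real.HolderConjugate.two_two
      (f := fun z => (k y z * ρ z) ^ (1 / 2 : ℝ)) (g := fun z => (k y z * H z) ^ (1 / 2 : ℝ))
      (((hky y).mul hρ).pow_const _).aemeasurable (((hky y).mul hH).pow_const _).aemeasurable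
    have h3 := h1.trans h2
    simp only [← ENNReal.rpow_mul] at h3
    norm_num at h3
    calc (∫⁻ z, k y z * g z ∂μ) ^ 2 ≤ _ := pow_le_pow_left₀ (zero_le) h3 2
      _ = (∫⁻ z, k y z * ρ z ∂μ) * (∫⁻ z, k y z * H z ∂μ) := by
        rw [mul_pow, ← ENNReal.rpow_natCast, ← ENNReal.rpow_natCast, ← ENNReal.rpow_mul, ← ENNReal.rpow_mul]
        norm_num
      _ ≤ _ := by gcongr; exact hA y
  calc _ ≤ ∫⁻ y, A * ∫⁻ z, ρ y * (k y z * H z) ∂μ ∂μ := by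
        refine lintegral_mono fun y => ?_
        rw [show ∫⁻ z, ρ y * (k y z * H z) ∂μ = ρ y * ∫⁻ z, k y z * H z ∂μ from lintegral_const_mul _ ((hky y).mul hH)]
        calc _ ≤ ρ y * (A * ∫⁻ z, k y z * H z ∂μ) := by gcongr; exact step y
          _ = _ := by ring
    _ = A * ∫⁻ y, ∫⁻ z, ρ y * (k y z * H z) ∂μ ∂μ := by
        rw [lintegral_const_mul]
        apply Measurable.lintegral_prod_right'
          (f := fun p : ℝ × ℝ => ρ p.1 * (k p.1 p.2 * H p.2))
        exact (hρ.comp measurable_fst).mul (hk.mul (hH.comp measurable_snd))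
    _ = A * ∫⁻ z, ∫⁻ y, ρ y * (k y z * H z) ∂μ ∂μ := by
        rw [lintegral_lintegral_swap]
        exact ((hρ.comp measurable_fst).mul (hk.mul (hH.comp measurable_snd))).aemeasurable
    _ ≤ A * ∫⁻ z, A * H z ∂μ := by
        gcongr with z
        calc ∫⁻ y, ρ y * (k y z * H z) ∂μ = ∫⁻ y, (ρ y * k y z) * H z ∂μ := by simp_rw [mul_assoc]
          _ = (∫⁻ y, ρ y * k y z ∂μ) * H z := by
            rw [lintegral_mul_const]
            exact hρ.mul (hk.of_uncurry_right)
          _ ≤ _ := by gcongr; exact hB z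
    _ = _ := by rw [lintegral_const_mul _ hH, mul_assoc]

def DD (x : ℝ) : ℝ := ‖Complex.exp (Complex.I * x) - 1‖

lemma DD_cont : Continuous DD := by unfold DD; fun_prop
lemma DD_nonneg (x : ℝ) : 0 ≤ DD x := norm_nonneg _
lemma DD_periodic : Function.Periodic DD (2 * Real.pi) := by
  intro x
  unfold DD
  have : Complex.I * ((x + 2 * Real.pi : ℝ) : ℂ) = Complex.I * x + 2 * Real.pi * Complex.I := by
    push_cast; ring
  rw [this, Complex.exp_periodic]
lemma DD_eq (x : ℝ) : DD x = 2 * |Real.sin (x / 2)| := by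
  unfold DD
  rw [Complex.norm_exp_I_mul_ofReal_sub_one, norm_mul]; simp
lemma DD_neg (x : ℝ) : DD (-x) = DD x := by
  rw [DD_eq, DD_eq, neg_div, Real.sin_neg, abs_neg]
lemma DD_add (x y : ℝ) : DD (x + y) ≤ DD x + DD y := by
  unfold DD
  have : Complex.exp (Complex.I * ((x + y : ℝ) : ℂ)) - 1 =
    (Complex.exp (Complex.I * x) - 1) + Complex.exp (Complex.I * x) * (Complex.exp (Complex.I * y) - 1) := by
    push_cast
    rw [mul_add, Complex.exp_add]; ring
  rw [this]
  refine (norm_add_le _ _).trans ?_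
  rw [norm_mul]
  have := norm_expI 1 x
  simp only [Int.cast_one, mul_one] at this
  rw [this, one_mul]
lemma DD_lower {x : ℝ} (hx : |x| ≤ Real.pi) : 2 / Real.pi * |x| ≤ DD x := by
  rw [DD_eq]
  have := Real.mul_abs_le_abs_sin (x := x / 2) (by rw [abs_div, abs_two]; linarith)
  rw [abs_div, abs_two] at this
  linarith

def MM (N : ℕ) (x : ℝ) : ℝ := 1 + N * DD x
lemma MM_one_le (N : ℕ) (x : ℝ) : 1 ≤ MM N x := by
  have := DD_nonneg x
  unfold MM
  have : 0 ≤ N * DD x := by positivity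
  linarith
lemma MM_pos (N : ℕ) (x : ℝ) : 0 < MM N x := lt_of_lt_of_le one_pos (MM_one_le N x)
lemma MM_cont (N : ℕ) : Continuous (MM N) := by
  unfold MM; exact continuous_const.add (continuous_const.mul DD_cont)
lemma MM_mul (N : ℕ) (x y : ℝ) : MM N (x + y) ≤ MM N x * MM N y := by
  unfold MM
  have hx := DD_nonneg x
  have hy := DD_nonneg y
  have hN : (0 : ℝ) ≤ N := by positivity
  have h := mul_le_mul_of_nonneg_left (DD_add x y) hN
  have : 0 ≤ (N * DD x) * (N * DD y) := by positivity
  nlinarith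
lemma MM_neg (N : ℕ) (x : ℝ) : MM N (-x) = MM N x := by unfold MM; rw [DD_neg]

lemma MM_rpow (N : ℕ) {b : ℝ} (hb : |b| ≤ 1) (y z : ℝ) :
    MM N y ^ b ≤ MM N z ^ b * MM N (y - z) := by
  have p1 := MM_pos N y
  have p2 := MM_pos N z
  have p3 := MM_pos N (y - z)
  have o3 := MM_one_le N (y - z)
  obtain ⟨hb1, hb2⟩ := abs_le.1 hb
  rcases le_total 0 b with h | h
  · have h1 : MM N y ≤ MM N z * MM N (y - z) := by
      have := MM_mul N z (y - z)
      rwa [add_sub_cancel] at this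
    calc MM N y ^ b ≤ (MM N z * MM N (y - z)) ^ b := Real.rpow_le_rpow p1.le h1 h
      _ = MM N z ^ b * MM N (y - z) ^ b := Real.mul_rpow p2.le p3.le
      _ ≤ MM N z ^ b * MM N (y - z) ^ (1 : ℝ) := by
        gcongr
      _ = _ := by rw [Real.rpow_one]
  · have h1 : MM N z ≤ MM N y * MM N (y - z) := by
      have := MM_mul N y (-(y - z))
      rwa [MM_neg, show y + -(y - z) = z by ring] at this
    have h2 : (MM N y * MM N (y - z)) ^ b ≤ MM N z ^ b :=
      Real.rpow_le_rpow_of_nonpos p2 h1 h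
    rw [Real.mul_rpow p1.le p3.le] at h2
    have h3 : 1 ≤ MM N (y - z) ^ b * MM N (y - z) := by
      nth_rewrite 2 [← Real.rpow_one (MM N (y - z))]
      rw [← Real.rpow_add p3]
      exact Real.one_le_rpow o3 (by linarith)
    calc MM N y ^ b = MM N y ^ b * 1 := by ring
      _ ≤ MM N y ^ b * (MM N (y - z) ^ b * MM N (y - z)) := by gcongr
      _ = (MM N y ^ b * MM N (y - z) ^ b) * MM N (y - z) := by ring
      _ ≤ _ := by gcongr

def VV (N : ℕ) (T x : ℝ) : ℝ := Real.sqrt (T ^ 2 + (N * DD x) ^ 2)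
lemma VV_pos (N : ℕ) {T : ℝ} (hT : 0 < T) (x : ℝ) : 0 < VV N T x := by unfold VV; positivity
lemma VV_cont (N : ℕ) (T : ℝ) : Continuous (VV N T) := by
  unfold VV
  exact (continuous_const.add ((continuous_const.mul DD_cont).pow 2)).sqrt
lemma VV_le (N : ℕ) {T : ℝ} (hT : 0 < T) (hT1 : T ≤ 1) (x : ℝ) : VV N T x ≤ MM N x := by
  unfold VV MM
  have := DD_nonneg x
  have h : 0 ≤ N * DD x := by positivity
  rw [Real.sqrt_le_left (by positivity)]
  nlinarith
lemma le_VV (N : ℕ) {T : ℝ} (x : ℝ) : N * DD x ≤ VV N T x := by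
  unfold VV
  apply Real.le_sqrt_of_sq_le
  nlinarith [sq_nonneg T]

def RR (N : ℕ) (T r x : ℝ) : ℝ := (MM N x / VV N T x) ^ r
lemma RR_cont (N : ℕ) {T : ℝ} (hT : 0 < T) (r : ℝ) : Continuous (RR N T r) := by
  unfold RR
  apply ((MM_cont N).div (VV_cont N T) (fun x => (VV_pos N hT x).ne')).rpow_const
  intro x
  exact Or.inl (div_pos (MM_pos N x) (VV_pos N hT x)).ne'
lemma RR_pos (N : ℕ) {T : ℝ} (hT : 0 < T) (r x : ℝ) : 0 < RR N T r x :=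
  Real.rpow_pos_of_pos (div_pos (MM_pos N x) (VV_pos N hT x)) _

lemma V_le_RM (N : ℕ) {T : ℝ} (hT : 0 < T) (hT1 : T ≤ 1) {r e : ℝ} (he : -e ≤ r) (x : ℝ) :
    VV N T x ^ e ≤ RR N T r x * MM N x ^ e := by
  have hm := MM_pos N x
  have hv := VV_pos N hT x
  have h1 : 1 ≤ MM N x / VV N T x := (one_le_div hv).2 (VV_le N hT hT1 x)
  have h2 : (MM N x / VV N T x) ^ (-e) ≤ RR N T r x := Real.rpow_le_rpow_of_exponent_le h1 he
  calc VV N T x ^ e = (MM N x / VV N T x) ^ (-e) * MM N x ^ e := by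
        rw [Real.rpow_neg (by positivity), Real.div_rpow hm.le hv.le]
        have := Real.rpow_pos_of_pos hm e
        have := Real.rpow_pos_of_pos hv e
        field_simp
    _ ≤ _ := by gcongr

lemma M_le_RV (N : ℕ) {T : ℝ} (hT : 0 < T) (hT1 : T ≤ 1) {r e : ℝ} (he : e ≤ r) (x : ℝ) :
    MM N x ^ e ≤ RR N T r x * VV N T x ^ e := by
  have hm := MM_pos N x
  have hv := VV_pos N hT x
  have h1 : 1 ≤ MM N x / VV N T x := (one_le_div hv).2 (VV_le N hT hT1 x)
  have h2 : (MM N x / VV N T x) ^ e ≤ RR N T r x := Real.rpow_le_rpow_of_exponent_le h1 he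
  calc MM N x ^ e = (MM N x / VV N T x) ^ e * VV N T x ^ e := by
        rw [Real.div_rpow hm.le hv.le]
        have := Real.rpow_pos_of_pos hv e
        field_simp
    _ ≤ _ := by gcongr

def QQ (r u : ℝ) : ℝ := Set.indicator (Set.Icc (-1) 1) (fun u => |u| ^ (-r)) u

lemma QQ_int {r : ℝ} (hr : r < 1) : Integrable (QQ r) := by
  unfold QQ
  rw [integrable_indicator_iff measurableSet_Icc]
  rw [← intervalIntegrable_iff_integrableOn_Icc_of_le (by norm_num)]
  have h1 : IntervalIntegrable (fun u : ℝ => |u| ^ (-r)) volume 0 1 := by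
    refine (intervalIntegral.intervalIntegrable_rpow' (r := -r) (by linarith)).congr ?_
    intro u hu
    rw [Set.uIoc_of_le zero_le_one] at hu
    simp only [abs_of_pos hu.1]
  have h2 : IntervalIntegrable (fun u : ℝ => |u| ^ (-r)) volume (-1) 0 := by
    have := (IntervalIntegrable.iff_comp_neg (a := (0:ℝ)) (b := 1)
      (f := fun u : ℝ => |u| ^ (-r))).1 h1
    simpa using this.symm
  exact h2.trans h1

lemma QQ_nonneg (r u : ℝ) : 0 ≤ QQ r u := by
  unfold QQ
  exact Set.indicator_nonneg (fun u _ => by positivity) u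

lemma RR_le (N : ℕ) (hN : 1 ≤ N) {T : ℝ} (hT : 0 < T) {r : ℝ} (hr0 : 0 ≤ r) (hr : r < 1)
    {x : ℝ} (hx : |x| ≤ Real.pi) (hx0 : x ≠ 0) : RR N T r x ≤ 2 + QQ r (2 / Real.pi * N * x) := by
  have hN0 : (0 : ℝ) < N := by exact_mod_cast hN
  set u := 2 / Real.pi * N * x with hu
  have hau : |u| ≤ N * DD x := by
    rw [hu, abs_mul, abs_of_pos (by positivity)]
    have := mul_le_mul_of_nonneg_left (DD_lower hx) hN0.le
    linarith
  have hu0 : 0 < |u| := abs_pos.2 (by rw [hu]; positivity)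
  have hND : 0 < N * DD x := hu0.trans_le hau
  have hv := VV_pos N hT x
  have h1 : MM N x / VV N T x ≤ 1 + |u|⁻¹ := by
    calc MM N x / VV N T x ≤ MM N x / (N * DD x) := by
          have := MM_pos N x
          gcongr
          exact le_VV N x
      _ = 1 + (N * DD x)⁻¹ := by unfold MM; rw [add_div, div_self hND.ne', one_div, add_comm]
      _ ≤ _ := by gcongr
  have h2 : RR N T r x ≤ 1 + |u| ^ (-r) := by
    calc RR N T r x ≤ (1 + |u|⁻¹) ^ r := Real.rpow_le_rpow (div_pos (MM_pos N x) hv).le h1 hr0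
      _ ≤ 1 ^ r + (|u|⁻¹) ^ r := Real.rpow_add_le_add_rpow zero_le_one (by positivity) hr0 hr.le
      _ = _ := by rw [Real.one_rpow, Real.inv_rpow hu0.le, Real.rpow_neg hu0.le]
  by_cases h : u ∈ Set.Icc (-1 : ℝ) 1
  · have : QQ r u = |u| ^ (-r) := by unfold QQ; rw [Set.indicator_of_mem h]
    rw [this]; linarith
  · have : QQ r u = 0 := by unfold QQ; rw [Set.indicator_of_notMem h]
    rw [this]
    have h3 : 1 ≤ |u| := by
      by_contra h4
      push Not at h4
      exact h (abs_le.1 h4.le)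
    have : |u| ^ (-r) ≤ 1 := Real.rpow_le_one_of_one_le_of_nonpos h3 (by linarith)
    linarith

lemma lint_scale {q : ℝ → ℝ} (hq : Integrable q) (hq0 : ∀ u, 0 ≤ q u) {a : ℝ} (ha : 0 < a) (N : ℕ) (hN : 1 ≤ N) :
    ∫⁻ y : ℝ, ENNReal.ofReal (N * q (a * N * y)) = ENNReal.ofReal (a⁻¹ * ∫ u, q u) := by
  have hN0 : (0 : ℝ) < N := by exact_mod_cast hN
  have haN : a * N ≠ 0 := by positivity
  rw [← ofReal_integral_eq_lintegral_ofReal ((hq.comp_mul_left' haN).const_mul _)]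
  · rw [integral_const_mul, Measure.integral_comp_mul_left, abs_of_pos (by positivity)]
    congr 1
    rw [smul_eq_mul]
    field_simp
  · exact ae_of_all _ fun y => mul_nonneg hN0.le (hq0 _)

lemma Phi_int (N : ℕ) (hN : 1 ≤ N) (z : ℝ) :
    ∫⁻ y in Set.Ioc (-Real.pi) Real.pi, ENNReal.ofReal (N / MM N (y - z) ^ 2)
      ≤ ENNReal.ofReal ((2 / Real.pi)⁻¹ * ∫ u : ℝ, (1 + u ^ 2)⁻¹) := by
  have hc : Continuous fun y => (N : ℝ) / MM N y ^ 2 :=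
    continuous_const.div ((MM_cont N).pow 2) (fun y => (pow_pos (MM_pos N y) 2).ne')
  have hle : -Real.pi ≤ Real.pi := by linarith [Real.pi_pos]
  have conv : ∀ w : ℝ, ∫⁻ y in Set.Ioc (-Real.pi) Real.pi, ENNReal.ofReal (N / MM N (y - w) ^ 2)
      = ENNReal.ofReal (∫ y in (-Real.pi)..Real.pi, N / MM N (y - w) ^ 2) := by
    intro w
    rw [intervalIntegral.integral_of_le hle, ofReal_integral_eq_lintegral_ofReal]
    · exact ((hc.comp (continuous_id.sub continuous_const)).intervalIntegrable _ _).1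
    · exact ae_of_all _ fun y => by have := MM_pos N (y - w); positivity
  have per : Function.Periodic (fun y => (N : ℝ) / MM N y ^ 2) (2 * Real.pi) := by
    intro y
    simp only [MM]
    rw [DD_periodic]
  have e : ∫ y in (-Real.pi)..Real.pi, (N : ℝ) / MM N (y - z) ^ 2
      = ∫ y in (-Real.pi)..Real.pi, (N : ℝ) / MM N (y - 0) ^ 2 := by
    rw [intervalIntegral.integral_comp_sub_right (fun y => (N : ℝ) / MM N y ^ 2),
      intervalIntegral.integral_comp_sub_right (fun y => (N : ℝ) / MM N y ^ 2)]
    have := per.intervalIntegral_add_eq (-Real.pi - z) (-Real.pi - 0)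
    convert this using 2 <;> ring
  rw [conv z, e, ← conv 0]
  rw [← lint_scale (a := 2 / Real.pi) integrable_inv_one_add_sq (fun u => by positivity) (by positivity) N hN]
  refine le_trans (setLIntegral_mono' measurableSet_Ioc ?_) (setLIntegral_le_lintegral (Set.Ioc (-Real.pi) Real.pi) _)
  intro y hy
  apply ENNReal.ofReal_le_ofReal
  rw [div_eq_mul_inv, sub_zero]
  gcongr
  have h := DD_lower (x := y) (abs_le.2 ⟨hy.1.le, hy.2⟩)
  have hN0 : (0 : ℝ) < N := by exact_mod_cast hN
  have h2 := mul_le_mul_of_nonneg_left h hN0.le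
  have h3 : (2 / Real.pi * N * y) ^ 2 = (N * (2 / Real.pi * |y|)) ^ 2 := by
    rw [mul_pow (N : ℝ), mul_pow (2 / Real.pi) |y|, sq_abs]; ring
  rw [h3]
  have h4 : 0 ≤ N * (2 / Real.pi * |y|) := by positivity
  unfold MM
  nlinarith

lemma schur_bound {r : ℝ} (hr0 : 0 ≤ r) (hr : r < 1) :
    ∃ C > (0 : ℝ), ∀ N : ℕ, 1 ≤ N → ∀ T : ℝ, 0 < T → ∀ z : ℝ,
      ∫⁻ y in Set.Ioc (-Real.pi) Real.pi, ENNReal.ofReal (RR N T r y * (N / MM N (y - z) ^ 2))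
        ≤ ENNReal.ofReal C := by
  have i1 : 0 ≤ ∫ u : ℝ, (1 + u ^ 2)⁻¹ := integral_nonneg fun u => by positivity
  have i2 : 0 ≤ ∫ u : ℝ, QQ r u := integral_nonneg fun u => QQ_nonneg r u
  have hpi := Real.pi_pos
  refine ⟨2 * ((2 / Real.pi)⁻¹ * ∫ u : ℝ, (1 + u ^ 2)⁻¹) + (2 / Real.pi)⁻¹ * (∫ u : ℝ, QQ r u) + 1,
    by positivity, ?_⟩
  intro N hN T hT z
  have hN0 : (0 : ℝ) < N := by exact_mod_cast hN
  have hc : Continuous fun y => (N : ℝ) / MM N (y - z) ^ 2 :=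
    continuous_const.div (((MM_cont N).comp (continuous_id.sub continuous_const)).pow 2)
      (fun y => (pow_pos (MM_pos N (y - z)) 2).ne')
  calc _ ≤ ∫⁻ y in Set.Ioc (-Real.pi) Real.pi, (ENNReal.ofReal 2 * ENNReal.ofReal (N / MM N (y - z) ^ 2)
          + ENNReal.ofReal (N * QQ r (2 / Real.pi * N * y))) := by
        apply lintegral_mono_ae
        have hne : ∀ᵐ y : ℝ ∂(volume.restrict (Set.Ioc (-Real.pi) Real.pi)), y ≠ 0 :=
          ae_restrict_of_ae (Measure.ae_ne volume 0)
        filter_upwards [hne, ae_restrict_mem measurableSet_Ioc] with y hy0 hy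
        have hM := MM_one_le N (y - z)
        have hM2 : 1 ≤ MM N (y - z) ^ 2 := one_le_pow₀ hM
        have hq := QQ_nonneg r (2 / Real.pi * N * y)
        rw [← ENNReal.ofReal_mul (by norm_num), ← ENNReal.ofReal_add (by positivity) (by positivity)]
        apply ENNReal.ofReal_le_ofReal
        have h1 := RR_le N hN hT hr0 hr (abs_le.2 ⟨hy.1.le, hy.2⟩) hy0
        have h2 : (N : ℝ) / MM N (y - z) ^ 2 ≤ N := div_le_self hN0.le hM2
        have h3 : 0 ≤ (N : ℝ) / MM N (y - z) ^ 2 := by positivity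
        calc _ ≤ (2 + QQ r (2 / Real.pi * N * y)) * (N / MM N (y - z) ^ 2) := by gcongr
          _ = 2 * (N / MM N (y - z) ^ 2) + (N / MM N (y - z) ^ 2) * QQ r (2 / Real.pi * N * y) := by ring
          _ ≤ _ := by gcongr
    _ = ENNReal.ofReal 2 * (∫⁻ y in Set.Ioc (-Real.pi) Real.pi, ENNReal.ofReal (N / MM N (y - z) ^ 2))
        + ∫⁻ y in Set.Ioc (-Real.pi) Real.pi, ENNReal.ofReal (N * QQ r (2 / Real.pi * N * y)) := by
        rw [lintegral_add_left, lintegral_const_mul]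
        · exact hc.measurable.ennreal_ofReal
        · exact hc.measurable.ennreal_ofReal.const_mul _
    _ ≤ ENNReal.ofReal 2 * ENNReal.ofReal ((2 / Real.pi)⁻¹ * ∫ u : ℝ, (1 + u ^ 2)⁻¹)
        + ENNReal.ofReal ((2 / Real.pi)⁻¹ * (∫ u : ℝ, QQ r u)) := by
        gcongr
        · exact Phi_int N hN z
        · rw [← lint_scale (QQ_int hr) (QQ_nonneg r) (by positivity) N hN]
          exact setLIntegral_le_lintegral _ _
    _ ≤ _ := by
        rw [← ENNReal.ofReal_mul (by norm_num), ← ENNReal.ofReal_add (by positivity) (by positivity)]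
        apply ENNReal.ofReal_le_ofReal
        linarith

lemma core (η : ℝ → ℝ) (hη : ContDiff ℝ (⊤ : ℕ∞) η)
    (hηc : HasCompactSupport η) (b b' : ℝ)
    (hb'l : -(1 / 2 : ℝ) < b') (hbb : b' ≤ b) (hbu : b < 1 / 2) :
    ∃ C > (0 : ℝ), ∀ N : ℕ, 1 ≤ N → ∀ T : ℝ, 0 < T → T ≤ 1 → ∀ (F : Finset ℤ) (c : ℤ → ℂ),
      ∫ y in (-Real.pi)..Real.pi, VV N T y ^ (2 * b') *
        ‖∑ m ∈ F, (η ((m : ℝ) / N) : ℂ) * c m * Complex.exp (Complex.I * m * y)‖ ^ 2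
      ≤ C * ∫ y in (-Real.pi)..Real.pi, VV N T y ^ (2 * b) *
        ‖∑ m ∈ F, c m * Complex.exp (Complex.I * m * y)‖ ^ 2 := by
  obtain ⟨C0, hC0, hdec⟩ := ES_decay η hη hηc
  set r : ℝ := 2 * max |b| |b'| with hr
  have hbabs : |b| < 1 / 2 := abs_lt.2 ⟨by linarith, hbu⟩
  have hb'abs : |b'| < 1 / 2 := abs_lt.2 ⟨hb'l, by linarith⟩
  have hr0 : 0 ≤ r := by positivity
  have hr1 : r < 1 := by
    have := max_lt hbabs hb'abs
    linarith
  have hrb : 2 * b ≤ r := by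
    have := (le_abs_self b).trans (le_max_left |b| |b'|)
    linarith
  have hrb' : -(2 * b') ≤ r := by
    have := (neg_le_abs b').trans (le_max_right |b| |b'|)
    linarith
  obtain ⟨C1, hC1, hS⟩ := schur_bound hr0 hr1
  obtain ⟨R, hR⟩ : ∃ R : ℝ, ∀ t, R < |t| → η t = 0 := by
    obtain ⟨R, hR⟩ := hηc.isCompact.isBounded.exists_norm_le
    refine ⟨R, fun t ht => ?_⟩
    by_contra h
    exact absurd (hR t (subset_tsupport _ h)) (not_le.2 ht)
  obtain ⟨A, hA⟩ := exists_nat_ge R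
  have hg0 : ∀ t, (A : ℝ) < |t| → η t = 0 := fun t ht => hR t (hA.trans_lt ht)
  refine ⟨C0 ^ 2 * (C1 * C1), by positivity, ?_⟩
  intro N hN T hT hT1 F c
  have hN0 : (0 : ℝ) < N := by exact_mod_cast hN
  set f : ℝ → ℂ := fun y => ∑ m ∈ F, c m * Complex.exp (Complex.I * m * y) with hf
  set fe : ℝ → ℂ := fun y => ∑ m ∈ F, (η ((m : ℝ) / N) : ℂ) * c m * Complex.exp (Complex.I * m * y) with hfe
  have hfc : Continuous f := by simp only [hf]; fun_prop
  have hfec : Continuous fe := by simp only [hfe]; fun_prop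
  have hle : -Real.pi ≤ Real.pi := by linarith [Real.pi_pos]
  have hVc : ∀ e : ℝ, Continuous fun y => VV N T y ^ e := fun e =>
    (VV_cont N T).rpow_const fun y => Or.inl (VV_pos N hT y).ne'
  set μ : Measure ℝ := volume.restrict (Set.Ioc (-Real.pi) Real.pi) with hμ
  set k : ℝ → ℝ → ℝ≥0∞ := fun y z => ENNReal.ofReal (N / MM N (y - z) ^ 2) with hk
  set ρ : ℝ → ℝ≥0∞ := fun y => ENNReal.ofReal (RR N T r y) with hρ
  set H : ℝ → ℝ≥0∞ := fun z => ENNReal.ofReal (VV N T z ^ (2 * b) * ‖f z‖ ^ 2) with hH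
  set g : ℝ → ℝ≥0∞ := fun z => ENNReal.ofReal (MM N z ^ b * ‖f z‖) with hg
  have hkm : Measurable (Function.uncurry k) := by
    apply Measurable.ennreal_ofReal
    apply Continuous.measurable
    exact continuous_const.div (((MM_cont N).comp (continuous_fst.sub continuous_snd)).pow 2)
      (fun p => (pow_pos (MM_pos N _) 2).ne')
  have hρm : Measurable ρ := (RR_cont N hT r).measurable.ennreal_ofReal
  have hHm : Measurable H := ((hVc _).mul (hfc.norm.pow 2)).measurable.ennreal_ofReal
  have hgH : ∀ z, g z ≤ ρ z ^ (1 / 2 : ℝ) * H z ^ (1 / 2 : ℝ) := by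
    intro z
    have hRp := RR_pos N hT r z
    have hVp : 0 < VV N T z ^ (2 * b) := Real.rpow_pos_of_pos (VV_pos N hT z) _
    have hMp := MM_pos N z
    simp only [hg, hρ, hH]
    rw [ENNReal.ofReal_rpow_of_nonneg hRp.le (by norm_num),
      ENNReal.ofReal_rpow_of_nonneg (by positivity) (by norm_num),
      ← ENNReal.ofReal_mul (by positivity), ← Real.mul_rpow hRp.le (by positivity),
      ← Real.sqrt_eq_rpow]
    apply ENNReal.ofReal_le_ofReal
    apply Real.le_sqrt_of_sq_le
    have := M_le_RV N hT hT1 hrb z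
    rw [mul_comm 2 b, Real.rpow_mul hMp.le, Real.rpow_two, mul_comm b 2] at this
    rw [mul_pow, ← mul_assoc]
    gcongr
  have hA' : ∀ y, ∫⁻ z, k y z * ρ z ∂μ ≤ ENNReal.ofReal C1 := by
    intro y
    refine le_trans (le_of_eq ?_) (hS N hN T hT y)
    refine lintegral_congr fun z => ?_
    simp only [hk, hρ]
    rw [mul_comm, ← ENNReal.ofReal_mul (RR_pos N hT r z).le, ← MM_neg N (y - z), neg_sub]
  have hB' : ∀ z, ∫⁻ y, ρ y * k y z ∂μ ≤ ENNReal.ofReal C1 := by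
    intro z
    refine le_trans (le_of_eq ?_) (hS N hN T hT z)
    refine lintegral_congr fun y => ?_
    simp only [hk, hρ]
    rw [← ENNReal.ofReal_mul (RR_pos N hT r y).le]
  have main := schur (μ := μ) k hkm ρ H g hρm hHm hgH _ hA' hB'
  have pt1 : ∀ y, ENNReal.ofReal (MM N y ^ b * ‖fe y‖) ≤ ENNReal.ofReal C0 * ∫⁻ z, k y z * g z ∂μ := by
    intro y
    have hMb : 0 ≤ MM N y ^ b := Real.rpow_nonneg (MM_pos N y).le _
    have hconv := ES_conv hN hg0 F c y
    rw [intervalIntegral.integral_of_le hle] at hconv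
    have h1 : ‖fe y‖ ≤ ‖∫ z, ES N η (y - z) * f z ∂μ‖ := by
      rw [hμ, hconv, norm_mul, Complex.norm_real, Real.norm_of_nonneg (by positivity)]
      have : 1 ≤ 2 * Real.pi := by linarith [Real.pi_gt_three]
      exact le_mul_of_one_le_left (norm_nonneg _) this
    have h2 : ENNReal.ofReal ‖fe y‖ ≤ ∫⁻ z, ENNReal.ofReal (‖ES N η (y - z)‖ * ‖f z‖) ∂μ := by
      refine (ENNReal.ofReal_le_ofReal h1).trans ?_
      rw [ofReal_norm]
      refine (enorm_integral_le_lintegral_enorm _).trans (le_of_eq ?_)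
      refine lintegral_congr fun z => ?_
      rw [← norm_mul, ofReal_norm]
    rw [ENNReal.ofReal_mul hMb]
    calc _ ≤ ENNReal.ofReal (MM N y ^ b) * ∫⁻ z, ENNReal.ofReal (‖ES N η (y - z)‖ * ‖f z‖) ∂μ := by gcongr
      _ = ∫⁻ z, ENNReal.ofReal (MM N y ^ b) * ENNReal.ofReal (‖ES N η (y - z)‖ * ‖f z‖) ∂μ := by
        rw [lintegral_const_mul' _ _ ENNReal.ofReal_ne_top]
      _ ≤ ∫⁻ z, ENNReal.ofReal C0 * (k y z * g z) ∂μ := by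
        refine lintegral_mono fun z => ?_
        have hMp := MM_pos N (y - z)
        have hMzb : 0 ≤ MM N z ^ b := Real.rpow_nonneg (MM_pos N z).le _
        simp only [hk, hg]
        rw [← ENNReal.ofReal_mul hMb, ← ENNReal.ofReal_mul (by positivity), ← ENNReal.ofReal_mul hC0.le]
        apply ENNReal.ofReal_le_ofReal
        have d1 : ‖ES N η (y - z)‖ * MM N (y - z) ^ 3 ≤ C0 * N := hdec N hN (y - z)
        have d2 : ‖ES N η (y - z)‖ * MM N (y - z) ≤ C0 * (N / MM N (y - z) ^ 2) := by
          rw [← mul_div_assoc, le_div_iff₀ (by positivity)]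
          calc _ = _ := by ring
            _ ≤ _ := d1
        calc _ ≤ (MM N z ^ b * MM N (y - z)) * (‖ES N η (y - z)‖ * ‖f z‖) := by
              gcongr
              exact MM_rpow N (by linarith) y z
          _ = (‖ES N η (y - z)‖ * MM N (y - z)) * (MM N z ^ b * ‖f z‖) := by ring
          _ ≤ (C0 * (N / MM N (y - z) ^ 2)) * (MM N z ^ b * ‖f z‖) := by gcongr
          _ = _ := by ring
      _ = _ := by rw [lintegral_const_mul' _ _ ENNReal.ofReal_ne_top]
  have pt2 : ∀ y, ENNReal.ofReal (VV N T y ^ (2 * b') * ‖fe y‖ ^ 2) ≤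
      ENNReal.ofReal (C0 ^ 2) * (ρ y * (∫⁻ z, k y z * g z ∂μ) ^ 2) := by
    intro y
    have hMp := MM_pos N y
    have hRp := RR_pos N hT r y
    have h1 : VV N T y ^ (2 * b') * ‖fe y‖ ^ 2 ≤ RR N T r y * (MM N y ^ b * ‖fe y‖) ^ 2 := by
      have a1 := V_le_RM N hT hT1 hrb' y
      have a2 : MM N y ^ (2 * b') ≤ (MM N y ^ b) ^ 2 := by
        rw [← Real.rpow_two, ← Real.rpow_mul hMp.le]
        exact Real.rpow_le_rpow_of_exponent_le (MM_one_le N y) (by linarith)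
      calc _ ≤ (RR N T r y * MM N y ^ (2 * b')) * ‖fe y‖ ^ 2 := by gcongr
        _ ≤ (RR N T r y * (MM N y ^ b) ^ 2) * ‖fe y‖ ^ 2 := by gcongr
        _ = _ := by ring
    calc _ ≤ ENNReal.ofReal (RR N T r y * (MM N y ^ b * ‖fe y‖) ^ 2) := ENNReal.ofReal_le_ofReal h1
      _ = ρ y * (ENNReal.ofReal (MM N y ^ b * ‖fe y‖)) ^ 2 := by
        rw [ENNReal.ofReal_mul hRp.le, ENNReal.ofReal_pow (by positivity)]
      _ ≤ ρ y * (ENNReal.ofReal C0 * ∫⁻ z, k y z * g z ∂μ) ^ 2 := by gcongr; exact pt1 y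
      _ = _ := by rw [ENNReal.ofReal_pow hC0.le]; ring
  have conv : ∀ (e : ℝ) (h : ℝ → ℂ), Continuous h →
      ENNReal.ofReal (∫ y in (-Real.pi)..Real.pi, VV N T y ^ e * ‖h y‖ ^ 2)
        = ∫⁻ y, ENNReal.ofReal (VV N T y ^ e * ‖h y‖ ^ 2) ∂μ := by
    intro e h hh
    rw [intervalIntegral.integral_of_le hle, ofReal_integral_eq_lintegral_ofReal]
    · exact (((hVc e).mul (hh.norm.pow 2)).intervalIntegrable _ _).1
    · exact ae_of_all _ fun y => by
        have := Real.rpow_pos_of_pos (VV_pos N hT y) e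
        positivity
  have hnn : 0 ≤ ∫ y in (-Real.pi)..Real.pi, VV N T y ^ (2 * b) * ‖f y‖ ^ 2 :=
    intervalIntegral.integral_nonneg hle fun y _ => by
      have := Real.rpow_pos_of_pos (VV_pos N hT y) (2 * b)
      positivity
  rw [← ENNReal.ofReal_le_ofReal_iff (by positivity), ENNReal.ofReal_mul (by positivity), conv _ f hfc, conv _ fe hfec]
  calc _ ≤ ∫⁻ y, ENNReal.ofReal (C0 ^ 2) * (ρ y * (∫⁻ z, k y z * g z ∂μ) ^ 2) ∂μ :=
        lintegral_mono pt2
    _ = ENNReal.ofReal (C0 ^ 2) * ∫⁻ y, (ρ y * (∫⁻ z, k y z * g z ∂μ) ^ 2) ∂μ := by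
        rw [lintegral_const_mul' _ _ ENNReal.ofReal_ne_top]
    _ ≤ ENNReal.ofReal (C0 ^ 2) * (ENNReal.ofReal C1 * ENNReal.ofReal C1 * ∫⁻ z, H z ∂μ) := by gcongr
    _ = _ := by
        rw [ENNReal.ofReal_mul (by positivity), ENNReal.ofReal_mul hC1.le]
        simp only [hH]
        ring

lemma jbr_pos (x : ℝ) : 0 < jbr x := by unfold jbr; positivity
lemma jbr_one_le (x : ℝ) : 1 ≤ jbr x := by
  unfold jbr
  rw [Real.one_le_sqrt]
  nlinarith [sq_nonneg x]
lemma jbr_cont : Continuous jbr := by unfold jbr; fun_prop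
lemma jbr_mono {x y : ℝ} (hx : 0 ≤ x) (h : x ≤ y) : jbr x ≤ jbr y := by
  unfold jbr
  gcongr

lemma norm_dtau {τ : ℝ} (hτ : 0 < τ) (σ : ℝ) : ‖dtau τ σ‖ = DD (τ * σ) / τ := by
  unfold dtau DD
  rw [norm_div, Complex.norm_real, Real.norm_of_nonneg hτ.le]
  push_cast
  rw [mul_assoc]

lemma VV_eq (N : ℕ) {τ : ℝ} (hτ : 0 < τ) (x : ℝ) : VV N (N * τ) x = (N * τ) * jbr (DD x / τ) := by
  unfold VV jbr
  have : (N * τ) ^ 2 + (N * DD x) ^ 2 = (N * τ) ^ 2 * (1 + (DD x / τ) ^ 2) := by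
    field_simp
  rw [this, Real.sqrt_mul (by positivity), Real.sqrt_sq (by positivity)]

def TM (τ b : ℝ) (a : ℤ → ℂ) (k : ℤ) (σ : ℝ) : ℝ :=
  jbr ‖dtau τ (σ - (k : ℝ) ^ 2)‖ ^ (2 * b) *
      ‖(τ : ℂ) * ∑' m : ℤ, a m * Complex.exp (Complex.I * m * τ * σ)‖ ^ 2

lemma TM_nonneg (τ b : ℝ) (a : ℤ → ℂ) (k : ℤ) (σ : ℝ) : 0 ≤ TM τ b a k σ := by
  unfold TM
  have := jbr_pos ‖dtau τ (σ - (k : ℝ) ^ 2)‖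
  positivity

lemma TM_eq (τ b : ℝ) (F : Finset ℤ) (a : ℤ → ℂ) (ha : ∀ m ∉ F, a m = 0) (k : ℤ) (σ : ℝ) :
    TM τ b a k σ = jbr ‖dtau τ (σ - (k : ℝ) ^ 2)‖ ^ (2 * b) *
      ‖(τ : ℂ) * ∑ m ∈ F, a m * Complex.exp (Complex.I * m * τ * σ)‖ ^ 2 := by
  unfold TM
  rw [tsum_eq_sum (s := F)]
  intro m hm
  rw [ha m hm, zero_mul]

lemma TM_cont (τ b : ℝ) (F : Finset ℤ) (a : ℤ → ℂ) (ha : ∀ m ∉ F, a m = 0) (k : ℤ) :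
    Continuous (TM τ b a k) := by
  have : TM τ b a k = _ := funext (TM_eq τ b F a ha k)
  rw [this]
  apply Continuous.mul
  · apply Continuous.rpow_const
    · apply jbr_cont.comp
      unfold dtau
      fun_prop
    · intro x
      exact Or.inl (jbr_pos _).ne'
  · fun_prop

lemma TM_integral {τ : ℝ} (hτ : 0 < τ) (b : ℝ) (F : Finset ℤ) (a : ℤ → ℂ) (ha : ∀ m ∉ F, a m = 0) (k : ℤ) :
    ∫ σ in Set.Ioc (-(Real.pi / τ)) (Real.pi / τ), TM τ b a k σ
      = τ * ∫ x in (-Real.pi)..Real.pi, jbr (DD x / τ) ^ (2 * b) *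
        ‖∑ m ∈ F, (a m * Complex.exp (Complex.I * m * (τ * (k : ℝ) ^ 2 : ℝ))) * Complex.exp (Complex.I * m * x)‖ ^ 2 := by
  set h : ℝ → ℝ := fun x => jbr (DD x / τ) ^ (2 * b) *
        ‖∑ m ∈ F, (a m * Complex.exp (Complex.I * m * (τ * (k : ℝ) ^ 2 : ℝ))) * Complex.exp (Complex.I * m * x)‖ ^ 2 with hh
  have hle : -(Real.pi / τ) ≤ Real.pi / τ := by
    have : 0 < Real.pi / τ := by positivity
    linarith
  have e1 : ∀ σ, TM τ b a k σ = τ ^ 2 * h (τ * σ - τ * (k : ℝ) ^ 2) := by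
    intro σ
    rw [TM_eq τ b F a ha, norm_dtau hτ, norm_mul, Complex.norm_real, Real.norm_of_nonneg hτ.le]
    simp only [hh]
    rw [mul_sub]
    have : ∀ m ∈ F, a m * Complex.exp (Complex.I * m * τ * σ) =
      (a m * Complex.exp (Complex.I * m * (τ * (k : ℝ) ^ 2 : ℝ))) *
        Complex.exp (Complex.I * m * (τ * σ - τ * (k : ℝ) ^ 2 : ℝ)) := by
      intro m _
      rw [mul_assoc (a m), ← Complex.exp_add]
      congr 2
      push_cast; ring
    rw [Finset.sum_congr rfl this]
    ring
  have per : Function.Periodic h (2 * Real.pi) := by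
    intro x
    simp only [hh]
    rw [DD_periodic]
    congr 4
    ext m
    congr 1
    rw [Complex.exp_eq_exp_iff_exists_int]
    exact ⟨m, by push_cast; ring⟩
  rw [← intervalIntegral.integral_of_le hle]
  simp_rw [e1]
  rw [intervalIntegral.integral_const_mul, intervalIntegral.integral_comp_mul_sub h hτ.ne']
  have := per.intervalIntegral_add_eq (-Real.pi - τ * (k : ℝ) ^ 2) (-Real.pi)
  have e2 : ∫ x in (τ * -(Real.pi / τ) - τ * (k : ℝ) ^ 2)..(τ * (Real.pi / τ) - τ * (k : ℝ) ^ 2), h x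
      = ∫ x in (-Real.pi)..Real.pi, h x := by
    convert this using 2
    · field_simp
    · field_simp; ring
    · ring
  rw [e2, smul_eq_mul]
  field_simp

lemma TM_bound {τ : ℝ} (hτ : 0 < τ) (b : ℝ) (F : Finset ℤ) (a : ℤ → ℂ) (ha : ∀ m ∉ F, a m = 0) (k : ℤ) (σ : ℝ) :
    TM τ b a k σ ≤ (jbr (2 / τ) ^ (2 * |b|) * τ ^ 2 * F.card) * ∑ m ∈ F, ‖a m‖ ^ 2 := by
  rw [TM_eq τ b F a ha, norm_mul, Complex.norm_real, Real.norm_of_nonneg hτ.le, norm_dtau hτ]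
  set x := τ * (σ - (k : ℝ) ^ 2)
  have h1 : jbr (DD x / τ) ^ (2 * b) ≤ jbr (2 / τ) ^ (2 * |b|) := by
    have hd : DD x ≤ 2 := by
      rw [DD_eq]
      have := Real.abs_sin_le_one (x / 2)
      linarith
    have hd0 := DD_nonneg x
    calc _ ≤ jbr (DD x / τ) ^ (2 * |b|) :=
          Real.rpow_le_rpow_of_exponent_le (jbr_one_le _) (by linarith [le_abs_self b])
      _ ≤ _ := Real.rpow_le_rpow (jbr_pos _).le (jbr_mono (by positivity) (by gcongr)) (by positivity)
  have h2 : ‖∑ m ∈ F, a m * Complex.exp (Complex.I * m * τ * σ)‖ ^ 2 ≤ F.card * ∑ m ∈ F, ‖a m‖ ^ 2 := by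
    calc _ ≤ (∑ m ∈ F, ‖a m‖) ^ 2 := by
          gcongr
          refine (norm_sum_le _ _).trans (le_of_eq (Finset.sum_congr rfl fun m _ => ?_))
          have := norm_expI m (τ * σ)
          push_cast at this
          rw [norm_mul, mul_assoc _ (τ : ℂ), this, mul_one]
      _ ≤ _ := sq_sum_le_card_mul_sum_sq
  have hj := jbr_pos (DD x / τ)
  have hj2 := jbr_pos (2 / τ)
  rw [mul_pow]
  calc _ ≤ jbr (2 / τ) ^ (2 * |b|) * (τ ^ 2 * (F.card * ∑ m ∈ F, ‖a m‖ ^ 2)) := by gcongr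
    _ = _ := by ring

lemma sum_swap {τ : ℝ} (hτ : 0 < τ) (s b : ℝ) (F : Finset ℤ) (a : ℤ → ℤ → ℂ)
    (ha : ∀ k, ∀ m ∉ F, a k m = 0)
    (hs : ∀ m, Summable fun k : ℤ => jbr k ^ (2 * s) * ‖a k m‖ ^ 2) :
    (Summable fun k : ℤ => jbr k ^ (2 * s) * ∫ σ in Set.Ioc (-(Real.pi / τ)) (Real.pi / τ), TM τ b (a k) k σ) ∧
    ∫ σ in Set.Ioc (-(Real.pi / τ)) (Real.pi / τ), ∑' k : ℤ, jbr k ^ (2 * s) * TM τ b (a k) k σ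
      = ∑' k : ℤ, jbr k ^ (2 * s) * ∫ σ in Set.Ioc (-(Real.pi / τ)) (Real.pi / τ), TM τ b (a k) k σ := by
  have hint : ∀ k : ℤ, IntegrableOn (TM τ b (a k) k) (Set.Ioc (-(Real.pi / τ)) (Real.pi / τ)) := fun k =>
    ((TM_cont τ b F (a k) (ha k) k).integrableOn_Icc).mono_set Set.Ioc_subset_Icc_self
  have hj : ∀ k : ℤ, 0 ≤ jbr k ^ (2 * s) := fun k => Real.rpow_nonneg (jbr_pos _).le _
  set L : ℝ := volume.real (Set.Ioc (-(Real.pi / τ)) (Real.pi / τ))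
  set W : ℝ := jbr (2 / τ) ^ (2 * |b|) * τ ^ 2 * F.card
  have hsum : Summable fun k : ℤ => jbr k ^ (2 * s) *
      ∫ σ in Set.Ioc (-(Real.pi / τ)) (Real.pi / τ), TM τ b (a k) k σ := by
    have big : Summable fun k : ℤ => (W * L) * ∑ m ∈ F, jbr k ^ (2 * s) * ‖a k m‖ ^ 2 :=
      (summable_sum fun m _ => hs m).mul_left _
    refine Summable.of_nonneg_of_le (fun k => mul_nonneg (hj k) (integral_nonneg fun σ => TM_nonneg _ _ _ _ _)) ?_ big
    intro k
    have : ∫ σ in Set.Ioc (-(Real.pi / τ)) (Real.pi / τ), TM τ b (a k) k σ ≤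
        ∫ _ in Set.Ioc (-(Real.pi / τ)) (Real.pi / τ), W * ∑ m ∈ F, ‖a k m‖ ^ 2 := by
      apply setIntegral_mono (hint k) continuous_const.integrableOn_Ioc
      intro σ
      exact TM_bound hτ b F (a k) (ha k) k σ
    rw [setIntegral_const, smul_eq_mul] at this
    calc _ ≤ jbr k ^ (2 * s) * (L * (W * ∑ m ∈ F, ‖a k m‖ ^ 2)) := mul_le_mul_of_nonneg_left this (hj k)
      _ = _ := by rw [← Finset.mul_sum]; ring
  refine ⟨hsum, ?_⟩
  rw [← integral_tsum_of_summable_integral_norm]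
  · simp_rw [integral_const_mul]
  · intro k
    exact (hint k).const_mul _
  · refine hsum.congr fun k => ?_
    rw [← integral_const_mul]
    refine integral_congr_ae (ae_of_all _ fun σ => ?_)
    simp only
    rw [Real.norm_of_nonneg (mul_nonneg (hj k) (TM_nonneg _ _ _ _ _))]

lemma core_k (η : ℝ → ℝ) (hη : ContDiff ℝ (⊤ : ℕ∞) η)
    (hηc : HasCompactSupport η) (b b' : ℝ)
    (hb'l : -(1 / 2 : ℝ) < b') (hbb : b' ≤ b) (hbu : b < 1 / 2) :
    ∃ C > (0 : ℝ), ∀ τ ∈ Set.Ioc (0 : ℝ) 1, ∀ N : ℕ, 1 ≤ N → (N : ℝ) * τ ≤ 1 →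
      ∀ (F : Finset ℤ) (a : ℤ → ℂ), (∀ m ∉ F, a m = 0) → ∀ k : ℤ,
      ∫ σ in Set.Ioc (-(Real.pi / τ)) (Real.pi / τ), TM τ b' (fun m => (η ((m : ℝ) / N) : ℂ) * a m) k σ
        ≤ C * (((N : ℝ) * τ) ^ (b - b')) ^ 2 *
          ∫ σ in Set.Ioc (-(Real.pi / τ)) (Real.pi / τ), TM τ b a k σ := by
  obtain ⟨C, hC, hcore⟩ := core η hη hηc b b' hb'l hbb hbu
  refine ⟨C, hC, ?_⟩
  intro τ hτ N hN hNτ F a ha k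
  have hτ0 := hτ.1
  have hN0 : (0 : ℝ) < N := by exact_mod_cast hN
  set T : ℝ := N * τ with hT
  have hT0 : 0 < T := by positivity
  rw [TM_integral hτ0 b F a ha, TM_integral hτ0 b' F _ (fun m hm => by rw [ha m hm, mul_zero])]
  have h := hcore N hN T hT0 hNτ F (fun m => a m * Complex.exp (Complex.I * m * (τ * (k : ℝ) ^ 2 : ℝ)))
  have hV : ∀ (e x : ℝ), VV N T x ^ (2 * e) = T ^ (2 * e) * jbr (DD x / τ) ^ (2 * e) := by
    intro e x
    rw [hT, VV_eq N hτ0, Real.mul_rpow hT0.le (jbr_pos _).le]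
  simp_rw [hV, mul_assoc (T ^ (2 * b)), mul_assoc (T ^ (2 * b')), intervalIntegral.integral_const_mul] at h
  simp only [← mul_assoc] at h ⊢
  have hp : 0 < T ^ (2 * b') := Real.rpow_pos_of_pos hT0 _
  have hpow : T ^ (2 * b) = T ^ (2 * b') * (T ^ (b - b')) ^ 2 := by
    rw [← Real.rpow_two, ← Real.rpow_mul hT0.le, ← Real.rpow_add hT0]
    congr 1; ring
  rw [hpow] at h
  refine le_of_mul_le_mul_left ?_ hp
  calc _ = τ * (T ^ (2 * b') * _) := by ring
    _ ≤ τ * _ := mul_le_mul_of_nonneg_left h hτ0.le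
    _ = _ := by ring

/-- Gain `T^{b-b'}` from a rescaled time cutoff `η(nτ/T)`, `T = Nτ ≤ 1`,
for `-1/2 < b' ≤ b < 1/2`. -/
theorem discrete_bourgain_rescaled_cutoff (η : ℝ → ℝ) (hη : ContDiff ℝ (⊤ : ℕ∞) η)
    (hηc : HasCompactSupport η) (s b b' : ℝ)
    (hb'l : -(1 / 2 : ℝ) < b') (hbb : b' ≤ b) (hbu : b < 1 / 2) :
    ∃ C > (0 : ℝ), ∀ τ ∈ Set.Ioc (0 : ℝ) 1, ∀ N : ℕ, 1 ≤ N → (N : ℝ) * τ ≤ 1 →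
      ∀ u : ℤ → Torus → ℂ, (∀ n, InHs s (u n)) → {n : ℤ | u n ≠ 0}.Finite →
      XdNorm τ s b' (fun n x => (η ((n : ℝ) * τ / ((N : ℝ) * τ)) : ℂ) * u n x)
        ≤ C * ((N : ℝ) * τ) ^ (b - b') * XdNorm τ s b u := by
  obtain ⟨C, hC, hcore⟩ := core_k η hη hηc b b' hb'l hbb hbu
  refine ⟨Real.sqrt C, Real.sqrt_pos.2 hC, ?_⟩
  intro τ hτ N hN hNτ u hu hfin
  have hτ0 := hτ.1
  have hN0 : (0 : ℝ) < N := by exact_mod_cast hN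
  set F : Finset ℤ := hfin.toFinset with hF
  set a : ℤ → ℤ → ℂ := fun k m => fourierCoeff (u m) k with haDef
  have ha : ∀ k, ∀ m ∉ F, a k m = 0 := by
    intro k m hm
    have : u m = 0 := by
      by_contra h
      exact hm (by simp [hF, h])
    simp only [haDef, this]
    simp [fourierCoeff]
  have hs : ∀ m, Summable fun k : ℤ => jbr k ^ (2 * s) * ‖a k m‖ ^ 2 := fun m => (hu m).2
  set a' : ℤ → ℤ → ℂ := fun k m => (η ((m : ℝ) / N) : ℂ) * a k m with ha'Def
  have ha' : ∀ k, ∀ m ∉ F, a' k m = 0 := by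
    intro k m hm
    simp only [ha'Def, ha k m hm, mul_zero]
  have hs' : ∀ m, Summable fun k : ℤ => jbr k ^ (2 * s) * ‖a' k m‖ ^ 2 := by
    intro m
    refine ((hs m).mul_left (‖(η ((m : ℝ) / N) : ℂ)‖ ^ 2)).congr fun k => ?_
    simp only [ha'Def, norm_mul]
    ring
  obtain ⟨S1, E1⟩ := sum_swap hτ0 s b F a ha hs
  obtain ⟨S2, E2⟩ := sum_swap hτ0 s b' F a' ha' hs'
  have X1 : XdNorm τ s b u = Real.sqrt (∑' k : ℤ, jbr k ^ (2 * s) *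
      ∫ σ in Set.Ioc (-(Real.pi / τ)) (Real.pi / τ), TM τ b (a k) k σ) := by
    rw [← E1]
    simp only [XdNorm, TM, mul_assoc, haDef]
  have X2 : XdNorm τ s b' (fun n x => (η ((n : ℝ) * τ / ((N : ℝ) * τ)) : ℂ) * u n x) =
      Real.sqrt (∑' k : ℤ, jbr k ^ (2 * s) *
      ∫ σ in Set.Ioc (-(Real.pi / τ)) (Real.pi / τ), TM τ b' (a' k) k σ) := by
    rw [← E2]
    simp only [XdNorm, TM, mul_assoc, haDef, ha'Def, fourierCoeff.const_mul,
      mul_div_mul_right _ _ hτ0.ne']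
  rw [X1, X2]
  have hP : 0 ≤ ((N : ℝ) * τ) ^ (b - b') := by positivity
  rw [← Real.sqrt_sq hP, ← Real.sqrt_mul hC.le, ← Real.sqrt_mul (by positivity)]
  apply Real.sqrt_le_sqrt
  rw [← tsum_mul_left]
  refine S2.tsum_le_tsum (fun k => ?_) (S1.mul_left _)
  have hj : 0 ≤ jbr k ^ (2 * s) := Real.rpow_nonneg (jbr_pos _).le _
  calc _ ≤ jbr k ^ (2 * s) * _ := mul_le_mul_of_nonneg_left (hcore τ hτ N hN hNτ F (a k) (ha k) k) hj
    _ = _ := by ring
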